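/- arXiv:1911.05555 — 2 statements merged into one kernel-verified Lean document; each statement's English description precedes it below -/
import Mathlib

section
/- (Faddeev equation) For every K ∈ T^d, a number z ∈ ℂ \ Σ_K is an eigenvalue of the operator H(K) if and only if λ = 1 is an eigenvalue of the compact operator T(K, z); moreover, the eigenvalues z of H(K) and 1 of T(K,z) have the same multiplicities, i.e. dim ker(H(K) − z) = dim ker(I − T(K, z)). -/
open MeasureTheory Complex Filter Topology Set

noncomputable section

instance fact2pi : Fact (0 < 2 * Real.pi) := ⟨by positivity⟩

/-- The d-dimensional torus `(-π, π]^d` with its Haar (Lebesgue) measure. -/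
abbrev Td (d : ℕ) : Type := Fin d → AddCircle (2 * Real.pi)

/-- The Hilbert space `L²(T^d)`. -/
abbrev L2 (d : ℕ) := Lp ℂ 2 (volume : Measure (Td d))

/-- The Hilbert space `L²((T^d)²)`. -/
abbrev L2two (d : ℕ) := Lp ℂ 2 (volume : Measure (Td d × Td d))

/-- The swap map on `L²((T^d)²)`, `(S f)(p,q) = f(q,p)`. -/
def swapL (d : ℕ) : L2two d →ₗ[ℂ] L2two d :=
  Lp.compMeasurePreservingₗ ℂ Prod.swap MeasureTheory.Measure.measurePreserving_swap

/-- The subspace `L²_sym((T^d)²)` of symmetric functions, as the fixed-point space of swap. -/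
def symSub (d : ℕ) : Submodule ℂ (L2two d) := LinearMap.ker (swapL d - LinearMap.id)

abbrev L2sym (d : ℕ) := ↥(symSub d)

instance (d : ℕ) : CompleteSpace (L2sym d) := by
  have hiso : Isometry (swapL d) :=
    Lp.isometry_compMeasurePreserving MeasureTheory.Measure.measurePreserving_swap
  have hcl : IsClosed ((symSub d : Set (L2two d))) := by
    have h1 : (symSub d : Set (L2two d)) = {f | swapL d f = f} := by
      ext f
      simp [symSub, LinearMap.mem_ker, sub_eq_zero, LinearMap.sub_apply]
    rw [h1]
    exact isClosed_eq hiso.continuous continuous_id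
  exact hcl.completeSpace_coe

/-- The Hilbert space `ℂ ⊕ L²(T^d)`. -/
abbrev Hkk (d : ℕ) := WithLp 2 (ℂ × L2 d)

/-- The zero-particle component of an element of `ℂ ⊕ L²(T^d)`. -/
def pk1 {d : ℕ} (f : Hkk d) : ℂ := (WithLp.equiv 2 (ℂ × L2 d) f).1

/-- The one-particle component of an element of `ℂ ⊕ L²(T^d)`. -/
def pk2 {d : ℕ} (f : Hkk d) : L2 d := (WithLp.equiv 2 (ℂ × L2 d) f).2

/-- The Hilbert space `H = ℂ ⊕ L²(T^d) ⊕ L²_sym((T^d)²)`. -/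
abbrev H3 (d : ℕ) := WithLp 2 (ℂ × WithLp 2 (L2 d × L2sym d))

/-- The zero-particle component. -/
def p0 {d : ℕ} (f : H3 d) : ℂ := (WithLp.equiv 2 _ f).1

/-- The one-particle component. -/
def p1 {d : ℕ} (f : H3 d) : L2 d := (WithLp.equiv 2 _ ((WithLp.equiv 2 _ f).2)).1

/-- The two-particle component, as an element of `L²((T^d)²)`. -/
def p2 {d : ℕ} (f : H3 d) : L2two d :=
  ((WithLp.equiv 2 _ ((WithLp.equiv 2 _ f).2)).2 : L2sym d)

variable {d : ℕ}

/-- `E_min(K,k) = min_q w₂(K; k, q)`. -/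
def Emin (w₂ : Td d → Td d → Td d → ℝ) (K k : Td d) : ℝ := ⨅ q, w₂ K k q

/-- `E_max(K,k) = max_q w₂(K; k, q)`. -/
def Emax (w₂ : Td d → Td d → Td d → ℝ) (K k : Td d) : ℝ := ⨆ q, w₂ K k q

/-- `m_K = min_{p,q} w₂(K; p, q)`. -/
def mK (w₂ : Td d → Td d → Td d → ℝ) (K : Td d) : ℝ := ⨅ x : Td d × Td d, w₂ K x.1 x.2

/-- `M_K = max_{p,q} w₂(K; p, q)`. -/
def MK (w₂ : Td d → Td d → Td d → ℝ) (K : Td d) : ℝ := ⨆ x : Td d × Td d, w₂ K x.1 x.2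

/-- The Fredholm determinant
`Δ_K(k; z) = w₁(K,k) − z − (1/2) ∫ v₁(t)² / (w₂(K;k,t) − z) dt`. -/
def Delta (v₁ : Td d → ℝ) (w₁ : Td d → Td d → ℝ) (w₂ : Td d → Td d → Td d → ℝ)
    (K k : Td d) (z : ℂ) : ℂ :=
  (w₁ K k : ℂ) - z - (1 / 2) * ∫ t, (v₁ t : ℂ) ^ 2 / ((w₂ K k t : ℂ) - z)

/-- The interval `[E_min(K,k), E_max(K,k)]`, viewed inside `ℂ`. -/
def bandKk (w₂ : Td d → Td d → Td d → ℝ) (K k : Td d) : Set ℂ :=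
  Complex.ofReal '' Set.Icc (Emin w₂ K k) (Emax w₂ K k)

/-- The interval `[m_K, M_K]`, viewed inside `ℂ`. -/
def bigBand (w₂ : Td d → Td d → Td d → ℝ) (K : Td d) : Set ℂ :=
  Complex.ofReal '' Set.Icc (mK w₂ K) (MK w₂ K)

/-- The two-particle branch
`Λ_K = {z : ∃ k, z ∉ [E_min(K,k), E_max(K,k)] ∧ Δ_K(k; z) = 0}`. -/
def LamK (v₁ : Td d → ℝ) (w₁ : Td d → Td d → ℝ) (w₂ : Td d → Td d → Td d → ℝ)
    (K : Td d) : Set ℂ :=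
  {z | ∃ k, z ∉ bandKk w₂ K k ∧ Delta v₁ w₁ w₂ K k z = 0}

/-- `Σ_K = [m_K, M_K] ∪ Λ_K`. -/
def SigK (v₁ : Td d → ℝ) (w₁ : Td d → Td d → ℝ) (w₂ : Td d → Td d → Td d → ℝ)
    (K : Td d) : Set ℂ :=
  bigBand w₂ K ∪ LamK v₁ w₁ w₂ K

/-- The defining equations of the `3×3` operator matrix `H(K)` acting on
`ℂ ⊕ L²(T^d) ⊕ L²_sym((T^d)²)`:
`(H f)₀ = w₀(K) f₀ + ∫ v₀(t) f₁(t) dt`,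
`(H f)₁(p) = v₀(p) f₀ + w₁(K; p) f₁(p) + ∫ v₁(t) f₂(p,t) dt`,
`(H f)₂(p,q) = (1/2)(v₁(p) f₁(q) + v₁(q) f₁(p)) + w₂(K; p,q) f₂(p,q)`. -/
def IsHamiltonian {d : ℕ} (w₀ v₀ v₁ : Td d → ℝ) (w₁ : Td d → Td d → ℝ)
    (w₂ : Td d → Td d → Td d → ℝ) (K : Td d) (H : H3 d →L[ℂ] H3 d) : Prop :=
  ∀ f : H3 d,
    (p0 (H f) = (w₀ K : ℂ) * p0 f + (∫ t, (v₀ t : ℂ) * (p1 f) t)) ∧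
    (⇑(p1 (H f)) =ᵐ[volume] fun p =>
        (v₀ p : ℂ) * p0 f + (w₁ K p : ℂ) * (p1 f) p +
          (∫ t, (v₁ t : ℂ) * (p2 f) (p, t))) ∧
    (⇑(p2 (H f)) =ᵐ[volume] fun x : Td d × Td d =>
        ((v₁ x.1 : ℂ) * (p1 f) x.2 + (v₁ x.2 : ℂ) * (p1 f) x.1) / 2 +
          (w₂ K x.1 x.2 : ℂ) * (p2 f) x)

/-- The defining equations of the `2×2` block operator matrix `T(K, z)` acting on
`ℂ ⊕ L²(T^d)`:
`(T g)₀ = (1 + w₀(K) − z) g₀ + ∫ v₀(t) g₁(t) dt`,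
`(T g)₁(p) = −v₀(p) g₀ / Δ_K(p; z) + (v₁(p)/(2Δ_K(p; z))) ∫ v₁(t) g₁(t)/(w₂(K;p,t) − z) dt`. -/
def IsTOp {d : ℕ} (w₀ v₀ v₁ : Td d → ℝ) (w₁ : Td d → Td d → ℝ)
    (w₂ : Td d → Td d → Td d → ℝ) (K : Td d) (z : ℂ) (T : Hkk d →L[ℂ] Hkk d) : Prop :=
  ∀ g : Hkk d,
    (pk1 (T g) = (1 + (w₀ K : ℂ) - z) * pk1 g + (∫ t, (v₀ t : ℂ) * (pk2 g) t)) ∧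
    (⇑(pk2 (T g)) =ᵐ[volume] fun p =>
        -((v₀ p : ℂ) * pk1 g) / Delta v₁ w₁ w₂ K p z +
          (v₁ p : ℂ) / (2 * Delta v₁ w₁ w₂ K p z) *
            (∫ t, (v₁ t : ℂ) * (pk2 g) t / ((w₂ K p t : ℂ) - z)))

/-!
Since `z ∉ [m_K, M_K]`, the two-particle component of the equation `H f = z f` can be solved for
`f₂ = -(v₁(p) f₁(q) + v₁(q) f₁(p)) / (2 (w₂(K; p, q) - z))`. Substituting this into the
one-particle component turns `w₁(K; p) - z` into `Δ_K(p; z)` and leaves an integral operator acting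
on `f₁`; dividing by `Δ_K(p; z)`, which does not vanish because `z ∉ Λ_K`, gives the equation
`T (f₀, f₁) = (f₀, f₁)`. So forgetting `f₂` is a linear bijection from `ker (H - z)` onto
`ker (1 - T)`.
-/

section Submodule

variable {R V W : Type*} [Semiring R] [AddCommMonoid V] [Module R V] [AddCommMonoid W] [Module R W]

/-- The linear equivalence between two submodules on which a linear map is bijective. -/
def linearEquivOfBijOn (φ : V →ₗ[R] W) {A : Submodule R V} {B : Submodule R W}
    (h : BijOn φ A B) : A ≃ₗ[R] B :=
  LinearEquiv.ofBijective (φ.restrict h.mapsTo) h.bijective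

theorem exists_mem_ne_zero_iff_of_linearEquiv {A : Submodule R V} {B : Submodule R W}
    (e : A ≃ₗ[R] B) : (∃ f ∈ A, f ≠ 0) ↔ ∃ g ∈ B, g ≠ 0 := by
  rw [← Submodule.ne_bot_iff, ← Submodule.ne_bot_iff, ← Submodule.nontrivial_iff_ne_bot,
    ← Submodule.nontrivial_iff_ne_bot, e.toEquiv.nontrivial_congr]

end Submodule

theorem exists_norm_inv_sub_le_of_isClosed {𝕜 : Type*} [NormedDivisionRing 𝕜] {s : Set 𝕜} {z : 𝕜}
    (hs : IsClosed s) (hz : z ∉ s) : ∃ C, ∀ a ∈ s, ‖(a - z)⁻¹‖ ≤ C := by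
  refine ⟨(Metric.infDist z s)⁻¹, fun a ha => ?_⟩
  rw [norm_inv, ← dist_eq_norm, dist_comm]
  exact inv_anti₀ ((hs.notMem_iff_infDist_pos ⟨a, ha⟩).1 hz) (Metric.infDist_le_dist_of_mem ha)

section Product

variable {X Y : Type*} [MeasurableSpace X] [MeasurableSpace Y] {μ : Measure X} {ν : Measure Y}

theorem memLp_two_mul_prod {𝕜 : Type*} [NormedDivisionRing 𝕜] [SFinite ν] {f : X → 𝕜} {g : Y → 𝕜}
    (hf : MemLp f 2 μ) (hg : MemLp g 2 ν) :
    MemLp (fun x : X × Y => f x.1 * g x.2) 2 (μ.prod ν) := by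
  rw [memLp_two_iff_integrable_sq_norm (hf.1.comp_fst.fun_mul hg.1.comp_snd)]
  simpa only [norm_mul, mul_pow] using hf.norm.integrable_sq.mul_prod hg.norm.integrable_sq

theorem ae_memLp_top_prodMk_left {E : Type*} [NormedAddCommGroup E] [SFinite ν] {r : X × Y → E}
    (hr : MemLp r ⊤ (μ.prod ν)) : ∀ᵐ x ∂μ, MemLp (fun y => r (x, y)) ⊤ ν := by
  have hess : ∀ᵐ x ∂μ.prod ν, ‖r x‖ₑ ≤ eLpNormEssSup r (μ.prod ν) := enorm_ae_le_eLpNormEssSup r _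
  filter_upwards [hr.1.prodMk_left, Measure.ae_ae_of_ae_prod hess] with x hmeas hbound
  refine ⟨hmeas, ?_⟩
  rw [eLpNorm_exponent_top]
  exact (essSup_le_of_ae_le _ hbound).trans_lt (eLpNorm_exponent_top (f := r) ▸ hr.2)

theorem ae_integral_prodMk_left_congr {E : Type*} [NormedAddCommGroup E] [NormedSpace ℝ E]
    [SFinite ν] {F G : X × Y → E} (h : F =ᵐ[μ.prod ν] G) :
    ∀ᵐ x ∂μ, ∫ y, F (x, y) ∂ν = ∫ y, G (x, y) ∂ν :=
  (Measure.ae_ae_of_ae_prod h).mono fun _ => integral_congr_ae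

end Product

section TwoParticlePart

/-- The function `f₂` determined by the one-particle component `f` through
`(v(p) f(q) + v(q) f(p)) / 2 + (ω(p, q) - z) f₂(p, q) = 0`. Where `ω(p, q) = z` the formula gives
the junk value `0`. -/
def twoParticlePart {X : Type*} (v : X → ℝ) (ω : X → X → ℝ) (z : ℂ) (f : X → ℂ) (x : X × X) : ℂ :=
  -(((v x.1 : ℂ) * f x.2 + (v x.2 : ℂ) * f x.1) / 2) / ((ω x.1 x.2 : ℂ) - z)

variable {X : Type*} {v : X → ℝ} {ω : X → X → ℝ} {z : ℂ} {f : X → ℂ}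

theorem twoParticlePart_swap (hω : ∀ p q, ω p q = ω q p) (x : X × X) :
    twoParticlePart v ω z f x.swap = twoParticlePart v ω z f x := by
  simp only [twoParticlePart, Prod.fst_swap, Prod.snd_swap, hω x.2 x.1, add_comm]

theorem eq_twoParticlePart_iff {x : X × X} (hω : (ω x.1 x.2 : ℂ) ≠ z) {y : ℂ} :
    y = twoParticlePart v ω z f x ↔
      ((v x.1 : ℂ) * f x.2 + (v x.2 : ℂ) * f x.1) / 2 + (ω x.1 x.2 : ℂ) * y = z * y := by
  rw [twoParticlePart, eq_div_iff (sub_ne_zero.2 hω)]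
  constructor <;> intro h <;> linear_combination h

variable [MeasurableSpace X] {μ : Measure X}

theorem memLp_twoParticlePart [SFinite μ] (hv : MemLp v 2 μ)
    (hω : MemLp (fun x : X × X => ((ω x.1 x.2 : ℂ) - z)⁻¹) ⊤ (μ.prod μ)) (hf : MemLp f 2 μ) :
    MemLp (twoParticlePart v ω z f) 2 (μ.prod μ) := by
  have hsum := (memLp_two_mul_prod hv.ofReal hf).add (memLp_two_mul_prod hf hv.ofReal)
  refine ((hsum.mul (r := 2) hω).const_mul (-1 / 2)).ae_eq (ae_of_all _ fun x => ?_)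
  simp only [twoParticlePart, Pi.mul_apply, Pi.add_apply, RCLike.ofReal_eq_complex_ofReal]
  ring

theorem integral_mul_twoParticlePart (hv : MemLp v 2 μ) (hf : MemLp f 2 μ) {p : X}
    (hω : MemLp (fun t => ((ω p t : ℂ) - z)⁻¹) ⊤ μ) :
    ∫ t, (v t : ℂ) * twoParticlePart v ω z f (p, t) ∂μ =
      -(v p / 2 * ∫ t, (v t : ℂ) * f t / ((ω p t : ℂ) - z) ∂μ) -
        1 / 2 * (∫ t, (v t : ℂ) ^ 2 / ((ω p t : ℂ) - z) ∂μ) * f p := by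
  have hv' : MemLp (fun t => (v t : ℂ)) 2 μ := hv.ofReal
  have hvr : MemLp (fun t => (v t : ℂ) * ((ω p t : ℂ) - z)⁻¹) 2 μ := hω.mul hv'
  have hvf : Integrable (fun t => (v t : ℂ) * f t / ((ω p t : ℂ) - z)) μ :=
    (hvr.integrable_mul hf).congr (ae_of_all _ fun t => by simp only [Pi.mul_apply]; ring)
  have hvv : Integrable (fun t => (v t : ℂ) ^ 2 / ((ω p t : ℂ) - z)) μ :=
    (hvr.integrable_mul hv').congr (ae_of_all _ fun t => by simp only [Pi.mul_apply]; ring)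
  rw [← integral_const_mul, ← integral_const_mul, ← integral_mul_const, ← integral_neg,
    ← integral_sub (hvf.const_mul _).fun_neg ((hvv.const_mul _).mul_const _)]
  refine integral_congr_ae (ae_of_all _ fun t => ?_)
  simp only [twoParticlePart]
  ring

end TwoParticlePart

section Spectrum

variable {v₁ : Td d → ℝ} {w₁ : Td d → Td d → ℝ} {w₂ : Td d → Td d → Td d → ℝ} {K : Td d} {z : ℂ}

theorem ofReal_mem_bigBand (hbdd : Bornology.IsBounded (range fun x : Td d × Td d => w₂ K x.1 x.2))
    (p q : Td d) : (w₂ K p q : ℂ) ∈ bigBand w₂ K :=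
  mem_image_of_mem _ ⟨ciInf_le hbdd.bddBelow (p, q), le_ciSup hbdd.bddAbove (p, q)⟩

theorem bandKk_subset_bigBand
    (hbdd : Bornology.IsBounded (range fun x : Td d × Td d => w₂ K x.1 x.2)) (k : Td d) :
    bandKk w₂ K k ⊆ bigBand w₂ K :=
  image_mono <| Icc_subset_Icc (le_ciInf fun q => ciInf_le hbdd.bddBelow (k, q))
    (ciSup_le fun q => le_ciSup hbdd.bddAbove (k, q))

theorem isClosed_bigBand : IsClosed (bigBand w₂ K) :=
  (isCompact_Icc.image continuous_ofReal).isClosed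

theorem Delta_ne_zero (hbdd : Bornology.IsBounded (range fun x : Td d × Td d => w₂ K x.1 x.2))
    (hz : z ∉ SigK v₁ w₁ w₂ K) (k : Td d) : Delta v₁ w₁ w₂ K k z ≠ 0 := fun h =>
  hz (.inr ⟨k, fun hk => hz (.inl (bandKk_subset_bigBand hbdd k hk)), h⟩)

theorem memLp_top_inv_dispersion_sub
    (hmeas : AEStronglyMeasurable fun x : Td d × Td d => w₂ K x.1 x.2)
    (hbdd : Bornology.IsBounded (range fun x : Td d × Td d => w₂ K x.1 x.2))
    (hz : z ∉ bigBand w₂ K) :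
    MemLp (fun x : Td d × Td d => ((w₂ K x.1 x.2 : ℂ) - z)⁻¹) ⊤ := by
  obtain ⟨C, hC⟩ := exists_norm_inv_sub_le_of_isClosed isClosed_bigBand hz
  have hmeas' := (continuous_ofReal.comp_aestronglyMeasurable hmeas).sub
    (aestronglyMeasurable_const (b := z))
  exact memLp_top_of_bound hmeas'.inv₀ C (ae_of_all _ fun x => hC _ (ofReal_mem_bigBand hbdd _ _))

end Spectrum

section Components

theorem H3.ext_iff {f g : H3 d} : f = g ↔ p0 f = p0 g ∧ p1 f = p1 g ∧ p2 f = p2 g := by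
  rw [← (WithLp.equiv 2 _).apply_eq_iff_eq, Prod.ext_iff, ← (WithLp.equiv 2 _).apply_eq_iff_eq,
    Prod.ext_iff, Subtype.ext_iff (a1 := (WithLp.equiv 2 _ (WithLp.equiv 2 _ f).2).2)]
  rfl

theorem Hkk.ext_iff {f g : Hkk d} : f = g ↔ pk1 f = pk1 g ∧ pk2 f = pk2 g := by
  rw [← (WithLp.equiv 2 _).apply_eq_iff_eq, Prod.ext_iff]
  rfl

/-- The projection `(f₀, f₁, f₂) ↦ (f₀, f₁)`. -/
def dropTwoParticle (d : ℕ) : H3 d →ₗ[ℂ] Hkk d where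
  toFun f := WithLp.toLp 2 (p0 f, p1 f)
  map_add' _ _ := rfl
  map_smul' _ _ := rfl

theorem toLp_mem_symSub {F : Td d × Td d → ℂ} (hF : MemLp F 2 volume)
    (hsymm : ∀ x, F x.swap = F x) : hF.toLp F ∈ symSub d := by
  rw [symSub, LinearMap.mem_ker, LinearMap.sub_apply, sub_eq_zero, LinearMap.id_apply]
  change Lp.compMeasurePreserving Prod.swap Measure.measurePreserving_swap (hF.toLp F) = _
  rw [Lp.toLp_compMeasurePreserving]
  exact MemLp.toLp_congr _ _ (ae_of_all _ hsymm)

theorem existsUnique_dropTwoParticle_eq {v : Td d → ℝ} {ω : Td d → Td d → ℝ} {z : ℂ}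
    (hv : MemLp v 2) (hω : MemLp (fun x : Td d × Td d => ((ω x.1 x.2 : ℂ) - z)⁻¹) ⊤)
    (hsymm : ∀ p q, ω p q = ω q p) (g : Hkk d) :
    ∃! f : H3 d, dropTwoParticle d f = g ∧ p2 f =ᵐ[volume] twoParticlePart v ω z (p1 f) := by
  have hF := memLp_twoParticlePart hv hω (Lp.memLp (pk2 g))
  refine ⟨WithLp.toLp 2 (pk1 g, WithLp.toLp 2 (pk2 g, ⟨_, toLp_mem_symSub hF
    (twoParticlePart_swap hsymm)⟩)), ⟨rfl, hF.coeFn_toLp⟩, ?_⟩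
  rintro f ⟨rfl, hf⟩
  exact H3.ext_iff.2 ⟨rfl, rfl, Lp.ext (hf.trans hF.coeFn_toLp.symm)⟩

end Components

section Reduction

/-- `g = (g₀, g₁)` lies in the kernel of the Schur complement of the two-particle block in
`H(K) - z`, i.e. of the operator left after eliminating `f₂` from `H(K) f = z f`. -/
def IsReducedSolution (w₀ v₀ v₁ : Td d → ℝ) (w₁ : Td d → Td d → ℝ) (w₂ : Td d → Td d → Td d → ℝ)
    (K : Td d) (z : ℂ) (g : Hkk d) : Prop :=
  (w₀ K : ℂ) * pk1 g + (∫ t, (v₀ t : ℂ) * (pk2 g) t) = z * pk1 g ∧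
  ∀ᵐ p, (v₀ p : ℂ) * pk1 g + Delta v₁ w₁ w₂ K p z * (pk2 g) p -
    v₁ p / 2 * (∫ t, (v₁ t : ℂ) * (pk2 g) t / ((w₂ K p t : ℂ) - z)) = 0

variable {w₀ v₀ v₁ : Td d → ℝ} {w₁ : Td d → Td d → ℝ} {w₂ : Td d → Td d → Td d → ℝ}
  {K : Td d} {z : ℂ}

theorem mul_add_integral_mul_twoParticlePart (hv₁ : MemLp v₁ 2) {f : Td d → ℂ} (hf : MemLp f 2)
    {p : Td d} (hω : MemLp (fun t => ((w₂ K p t : ℂ) - z)⁻¹) ⊤) :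
    (w₁ K p : ℂ) * f p + (∫ t, (v₁ t : ℂ) * twoParticlePart v₁ (w₂ K) z f (p, t)) =
      z * f p + Delta v₁ w₁ w₂ K p z * f p -
        v₁ p / 2 * (∫ t, (v₁ t : ℂ) * f t / ((w₂ K p t : ℂ) - z)) := by
  rw [integral_mul_twoParticlePart hv₁ hf hω, Delta]
  ring

theorem IsHamiltonian.p2_apply_eq_smul_iff {H : H3 d →L[ℂ] H3 d}
    (hH : IsHamiltonian w₀ v₀ v₁ w₁ w₂ K H) (hne : ∀ p q, (w₂ K p q : ℂ) ≠ z) (f : H3 d) :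
    p2 (H f) = z • p2 f ↔ p2 f =ᵐ[volume] twoParticlePart v₁ (w₂ K) z (p1 f) := by
  rw [Lp.ext_iff]
  refine eventually_congr ?_
  filter_upwards [(hH f).2.2, Lp.coeFn_smul z (p2 f)] with x hx hsmul
  rw [hx, hsmul, eq_twoParticlePart_iff (hne _ _), Pi.smul_apply, smul_eq_mul]

theorem IsHamiltonian.p1_apply_eq_smul_iff {H : H3 d →L[ℂ] H3 d}
    (hH : IsHamiltonian w₀ v₀ v₁ w₁ w₂ K H) (hv₁ : MemLp v₁ 2)
    (hω : MemLp (fun x : Td d × Td d => ((w₂ K x.1 x.2 : ℂ) - z)⁻¹) ⊤) {f : H3 d}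
    (hf : p2 f =ᵐ[volume] twoParticlePart v₁ (w₂ K) z (p1 f)) :
    p1 (H f) = z • p1 f ↔ ∀ᵐ p, (v₀ p : ℂ) * p0 f + Delta v₁ w₁ w₂ K p z * (p1 f) p -
      v₁ p / 2 * (∫ t, (v₁ t : ℂ) * (p1 f) t / ((w₂ K p t : ℂ) - z)) = 0 := by
  rw [Lp.ext_iff]
  refine eventually_congr ?_
  have hint : ∀ᵐ p, (∫ t, (v₁ t : ℂ) * (p2 f) (p, t)) =
      ∫ t, (v₁ t : ℂ) * twoParticlePart v₁ (w₂ K) z (p1 f) (p, t) :=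
    ae_integral_prodMk_left_congr (hf.mono fun x hx => congrArg ((v₁ x.2 : ℂ) * ·) hx)
  filter_upwards [(hH f).2.1, Lp.coeFn_smul z (p1 f), hint, ae_memLp_top_prodMk_left hω]
    with p hp hsmul hintp hωp
  have hΔ := mul_add_integral_mul_twoParticlePart (w₁ := w₁) hv₁ (Lp.memLp (p1 f)) hωp
  rw [hp, hsmul, hintp, Pi.smul_apply, smul_eq_mul, add_assoc, hΔ, ← sub_eq_zero]
  ring_nf

theorem IsHamiltonian.apply_eq_smul_iff {H : H3 d →L[ℂ] H3 d}
    (hH : IsHamiltonian w₀ v₀ v₁ w₁ w₂ K H) (hv₁ : MemLp v₁ 2)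
    (hω : MemLp (fun x : Td d × Td d => ((w₂ K x.1 x.2 : ℂ) - z)⁻¹) ⊤)
    (hne : ∀ p q, (w₂ K p q : ℂ) ≠ z) (f : H3 d) :
    H f = z • f ↔ IsReducedSolution w₀ v₀ v₁ w₁ w₂ K z (dropTwoParticle d f) ∧
      p2 f =ᵐ[volume] twoParticlePart v₁ (w₂ K) z (p1 f) := by
  have hp0 : p0 (H f) = z * p0 f ↔
      (w₀ K : ℂ) * p0 f + (∫ t, (v₀ t : ℂ) * (p1 f) t) = z * p0 f := by rw [(hH f).1]
  calc H f = z • f ↔ p0 (H f) = z * p0 f ∧ p1 (H f) = z • p1 f ∧ p2 (H f) = z • p2 f := H3.ext_iff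
    _ ↔ _ := by
      rw [hH.p2_apply_eq_smul_iff hne, hp0, ← and_assoc]
      exact and_congr_left fun hf => and_congr_right fun _ => hH.p1_apply_eq_smul_iff hv₁ hω hf

theorem IsTOp.apply_eq_self_iff {T : Hkk d →L[ℂ] Hkk d} (hT : IsTOp w₀ v₀ v₁ w₁ w₂ K z T)
    (hΔ : ∀ p, Delta v₁ w₁ w₂ K p z ≠ 0) (g : Hkk d) :
    T g = g ↔ IsReducedSolution w₀ v₀ v₁ w₁ w₂ K z g := by
  rw [Hkk.ext_iff, (hT g).1, Lp.ext_iff]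
  refine and_congr ?_ (eventually_congr ?_)
  · rw [← sub_eq_zero, ← sub_eq_zero (b := z * pk1 g)]
    ring_nf
  · filter_upwards [(hT g).2] with p hp
    have hne := hΔ p
    rw [hp, ← sub_eq_zero]
    field_simp
    constructor <;> intro h <;> linear_combination -h

theorem bijOn_dropTwoParticle (hv₁ : MemLp v₁ 2)
    (hmeas : AEStronglyMeasurable fun x : Td d × Td d => w₂ K x.1 x.2)
    (hbdd : Bornology.IsBounded (range fun x : Td d × Td d => w₂ K x.1 x.2))
    (hsymm : ∀ p q, w₂ K p q = w₂ K q p) (hz : z ∉ SigK v₁ w₁ w₂ K)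
    {H : H3 d →L[ℂ] H3 d} (hH : IsHamiltonian w₀ v₀ v₁ w₁ w₂ K H)
    {T : Hkk d →L[ℂ] Hkk d} (hT : IsTOp w₀ v₀ v₁ w₁ w₂ K z T) :
    BijOn (dropTwoParticle d) {f | H f = z • f} {g | T g = g} := by
  have hzBand : z ∉ bigBand w₂ K := fun h => hz (.inl h)
  have hω := memLp_top_inv_dispersion_sub hmeas hbdd hzBand
  have hne : ∀ p q, (w₂ K p q : ℂ) ≠ z := fun p q h => hzBand (h ▸ ofReal_mem_bigBand hbdd p q)
  have hH_iff := hH.apply_eq_smul_iff hv₁ hω hne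
  have hT_iff := hT.apply_eq_self_iff (Delta_ne_zero hbdd hz)
  have hext := existsUnique_dropTwoParticle_eq hv₁ hω hsymm
  refine ⟨fun f hf => (hT_iff _).2 ((hH_iff f).1 hf).1, fun f hf f' hf' h => ?_, fun g hg => ?_⟩
  · exact (hext _).unique ⟨h, ((hH_iff f).1 hf).2⟩ ⟨rfl, ((hH_iff f').1 hf').2⟩
  · obtain ⟨f, rfl, hf⟩ := (hext g).exists
    exact ⟨f, (hH_iff f).2 ⟨(hT_iff _).1 hg, hf⟩, rfl⟩

end Reduction

theorem faddeev_equation_general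
    {w₀ v₀ v₁ : Td d → ℝ} {w₁ : Td d → Td d → ℝ} {w₂ : Td d → Td d → Td d → ℝ} {K : Td d} {z : ℂ}
    (hv₁ : MemLp v₁ 2) (hmeas : AEStronglyMeasurable fun x : Td d × Td d => w₂ K x.1 x.2)
    (hbdd : Bornology.IsBounded (range fun x : Td d × Td d => w₂ K x.1 x.2))
    (hsymm : ∀ p q, w₂ K p q = w₂ K q p) (hz : z ∉ SigK v₁ w₁ w₂ K)
    {H : H3 d →L[ℂ] H3 d} (hH : IsHamiltonian w₀ v₀ v₁ w₁ w₂ K H)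
    {T : Hkk d →L[ℂ] Hkk d} (hT : IsTOp w₀ v₀ v₁ w₁ w₂ K z T) :
    ((∃ f : H3 d, f ≠ 0 ∧ H f = z • f) ↔ (∃ g : Hkk d, g ≠ 0 ∧ T g = g)) ∧
    Module.finrank ℂ (H - z • (1 : H3 d →L[ℂ] H3 d)).ker =
      Module.finrank ℂ ((1 : Hkk d →L[ℂ] Hkk d) - T).ker := by
  have hmemH : ∀ f, f ∈ (H - z • (1 : H3 d →L[ℂ] H3 d)).ker ↔ H f = z • f := fun _ => sub_eq_zero
  have hmemT : ∀ g, g ∈ ((1 : Hkk d →L[ℂ] Hkk d) - T).ker ↔ T g = g := fun _ =>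
    sub_eq_zero.trans eq_comm
  have hbij : BijOn (dropTwoParticle d) (H - z • (1 : H3 d →L[ℂ] H3 d)).ker
      ((1 : Hkk d →L[ℂ] Hkk d) - T).ker := by
    convert bijOn_dropTwoParticle hv₁ hmeas hbdd hsymm hz hH hT using 1
    exacts [Set.ext hmemH, Set.ext hmemT]
  have e := linearEquivOfBijOn _ hbij
  refine ⟨?_, e.finrank_eq⟩
  simpa only [hmemH, hmemT, and_comm] using exists_mem_ne_zero_iff_of_linearEquiv e

/-- **the Faddeev equation.** For `z ∈ ℂ \ Σ_K`, `z` is an eigenvalue of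
`H(K)` iff `1` is an eigenvalue of `T(K,z)`, and the multiplicities coincide. -/
theorem faddeev_equation
    (d : ℕ) (hd : 1 ≤ d)
    (w₀ v₀ v₁ : Td d → ℝ) (w₁ : Td d → Td d → ℝ) (w₂ : Td d → Td d → Td d → ℝ)
    (hw₀ : Continuous w₀) (hv₀ : Continuous v₀) (hv₁ : Continuous v₁)
    (hw₁ : Continuous fun x : Td d × Td d => w₁ x.1 x.2)
    (hw₂ : Continuous fun x : Td d × Td d × Td d => w₂ x.1 x.2.1 x.2.2)
    (hsym : ∀ K p q : Td d, w₂ K p q = w₂ K q p)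
    (K : Td d) (z : ℂ) (hz : z ∉ SigK v₁ w₁ w₂ K)
    (H : H3 d →L[ℂ] H3 d) (hH : IsHamiltonian w₀ v₀ v₁ w₁ w₂ K H)
    (T : Hkk d →L[ℂ] Hkk d) (hT : IsTOp w₀ v₀ v₁ w₁ w₂ K z T) :
    ((∃ f : H3 d, f ≠ 0 ∧ H f = z • f) ↔ (∃ g : Hkk d, g ≠ 0 ∧ T g = g)) ∧
    Module.finrank ℂ (LinearMap.ker ((H - z • (1 : H3 d →L[ℂ] H3 d) : H3 d →L[ℂ] H3 d) : H3 d →ₗ[ℂ] H3 d)) =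
      Module.finrank ℂ (LinearMap.ker (((1 : Hkk d →L[ℂ] Hkk d) - T : Hkk d →L[ℂ] Hkk d) : Hkk d →ₗ[ℂ] Hkk d)) := by
  have hw : Continuous fun x : Td d × Td d => w₂ K x.1 x.2 := by fun_prop
  exact faddeev_equation_general (hv₁.memLp_of_hasCompactSupport (.of_compactSpace _))
    hw.aestronglyMeasurable (isCompact_range hw).isBounded (hsym K) hz hH hT
end
end

section
/- For every K ∈ T^d, the interval [m_K, M_K] is contained in the essential spectrum of H(K): [m_K, M_K] ⊆ σ_ess(H(K)). -/
open MeasureTheory Complex Filter Topology Set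

noncomputable section

/-- The essential spectrum of a bounded operator on a Hilbert space, via the Weyl criterion:
`λ ∈ σ_ess(A)` iff there is an orthonormal (singular) sequence `u` with `‖(A - λ)uₙ‖ → 0`. -/
def essSpec {H' : Type*} [NormedAddCommGroup H'] [InnerProductSpace ℂ H']
    (A : H' →L[ℂ] H') : Set ℂ :=
  {l | ∃ u : ℕ → H', Orthonormal ℂ u ∧
        Tendsto (fun n => ‖A (u n) - l • u n‖) atTop (𝓝 0)}

variable {d : ℕ}

/-!
Let `z = (p, q)` and `λ = w₂(K; z)`. Indicator functions of disjoint swap-invariant shells shrinking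
to `{(p, q), (q, p)}` are pairwise orthogonal, and on two-particle functions `f` supported there
`H(K)` acts as multiplication by `w₂(K; ·) ≈ λ`, up to the one-particle component
`∫ v₁(t) f(·, t) dt`. By Cauchy–Schwarz the latter is at most `‖f‖` times the `L²` norm of `v₁` over
a small neighbourhood of `{p, q}`, which tends to zero; so `λ ∈ σ_ess(H(K))`. By connectedness every
point of `[m_K, M_K]` is such a `λ`.

That `v₁` is square integrable and `w₂(K; ·)` symmetric is read off from the two-particle component
of `H(K)` applied to constant functions.
-/

section WeylSequences

open Asymptotics

variable {𝕜 ι E : Type*} [RCLike 𝕜] [NormedAddCommGroup E]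

lemma orthonormal_inv_norm_smul [InnerProductSpace 𝕜 E] {v : ι → E} (hv0 : ∀ i, v i ≠ 0)
    (hv : Pairwise fun i j => inner 𝕜 (v i) (v j) = 0) :
    Orthonormal 𝕜 fun i => (‖v i‖⁻¹ : 𝕜) • v i :=
  ⟨fun i => norm_smul_inv_norm (hv0 i), fun i j hij => by
    have hij : inner 𝕜 (v i) (v j) = 0 := hv hij
    simp only [inner_smul_left, inner_smul_right, hij, mul_zero]⟩

lemma mem_essSpec_of_isLittleO [InnerProductSpace ℂ E] {A : E →L[ℂ] E} {l : ℂ} {v : ℕ → E}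
    (hv0 : ∀ n, v n ≠ 0) (hv : Pairwise fun i j => inner ℂ (v i) (v j) = 0)
    (hA : (fun n => A (v n) - l • v n) =o[atTop] v) : l ∈ essSpec A := by
  refine ⟨_, orthonormal_inv_norm_smul hv0 hv, ?_⟩
  refine hA.norm_norm.tendsto_div_nhds_zero.congr fun n => ?_
  rw [map_smul, smul_comm l, ← smul_sub, norm_smul, norm_inv, norm_algebraMap', norm_norm,
    div_eq_inv_mul]

end WeylSequences

section Slices

open scoped ENNReal

variable {X Y E 𝕜 : Type*} [MeasurableSpace X] [MeasurableSpace Y] [NormedAddCommGroup E]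
  [RCLike 𝕜] {μ : Measure X} {ν : Measure Y} [SFinite ν] {p q : ℝ≥0∞}

lemma eLpNorm_eLpNorm_prodMk {f : X × Y → E} (hf : AEStronglyMeasurable f (μ.prod ν))
    (hp : p ≠ 0) (hp' : p ≠ ∞) :
    eLpNorm (fun x => eLpNorm (fun y => f (x, y)) p ν) p μ = eLpNorm f p (μ.prod ν) := by
  simp only [eLpNorm_eq_lintegral_rpow_enorm_toReal hp hp', enorm_eq_self, ← ENNReal.rpow_mul,
    one_div, inv_mul_cancel₀ (ENNReal.toReal_ne_zero.2 ⟨hp, hp'⟩), ENNReal.rpow_one]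
  rw [lintegral_prod _ (hf.enorm.pow_const _)]

lemma ae_memLp_prodMk [SFinite μ] {f : X × Y → E} (hf : MemLp f p (μ.prod ν))
    (hp : p ≠ 0) (hp' : p ≠ ∞) : ∀ᵐ x ∂μ, MemLp (fun y => f (x, y)) p ν := by
  filter_upwards [((integrable_norm_rpow_iff hf.1 hp hp').2 hf).prod_right_ae, hf.1.prodMk_left]
    with x hint hmeas
  exact (integrable_norm_rpow_iff hmeas hp hp').1 hint

lemma eLpNorm_integral_mul_prodMk_le [p.HolderTriple q 1] {v : Y → 𝕜} {f : X × Y → 𝕜}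
    (hv : MemLp v p ν) (hf : AEStronglyMeasurable f (μ.prod ν)) (hq : q ≠ 0) (hq' : q ≠ ∞) :
    eLpNorm (fun x => ∫ y, v y * f (x, y) ∂ν) q μ ≤ eLpNorm v p ν * eLpNorm f q (μ.prod ν) := by
  rw [← eLpNorm_eLpNorm_prodMk hf hq hq', ← ENNReal.coe_toNNReal hv.2.ne]
  refine eLpNorm_le_mul_eLpNorm_of_ae_le_mul' ?_ q
  filter_upwards [hf.prodMk_left] with x hx
  rw [ENNReal.coe_toNNReal hv.2.ne, enorm_eq_self]
  calc ‖∫ y, v y * f (x, y) ∂ν‖ₑ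
    _ ≤ ∫⁻ y, ‖v y * f (x, y)‖ₑ ∂ν := enorm_integral_le_lintegral_enorm _
    _ = eLpNorm (v • fun y => f (x, y)) 1 ν := eLpNorm_one_eq_lintegral_enorm.symm
    _ ≤ eLpNorm v p ν * eLpNorm (fun y => f (x, y)) q ν := eLpNorm_smul_le_mul_eLpNorm hx hv.1

end Slices

section Shells

open Metric Function

lemma pairwise_disjoint_sdiff_succ {α : Type*} {U : ℕ → Set α} (hU : Antitone U) :
    Pairwise (Disjoint on fun n => U n \ U (n + 1)) :=
  (pairwise_disjoint_on _).2 fun _ _ hmn =>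
    disjoint_left.2 fun _ hm hn => hm.2 (hU (Nat.succ_le_of_lt hmn) hn.1)

lemma exists_subseq_measure_sdiff_succ_ne_zero {α : Type*} [MeasurableSpace α] {μ : Measure α}
    [IsFiniteMeasure μ] {U : ℕ → Set α} (hpos : ∀ n, μ (U n) ≠ 0)
    (hlim : Tendsto (fun n => μ (U n)) atTop (𝓝 0)) :
    ∃ φ : ℕ → ℕ, StrictMono φ ∧ ∀ n, μ (U (φ n) \ U (φ (n + 1))) ≠ 0 := by
  have hreal : ∀ n, 0 < μ.real (U n) := fun n => ENNReal.toReal_pos (hpos n) (measure_ne_top _ _)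
  have hlim' : Tendsto (fun n => μ.real (U n)) atTop (𝓝[>] 0) :=
    tendsto_nhdsWithin_iff.2
      ⟨(ENNReal.tendsto_toReal ENNReal.zero_ne_top).comp hlim, .of_forall hreal⟩
  obtain ⟨φ, hφ, hanti⟩ := strictMono_subseq_of_tendsto_atTop hlim'.inv_tendsto_nhdsGT_zero
  refine ⟨φ, hφ, fun n hnull => ?_⟩
  have hle : μ (U (φ n)) ≤ μ (U (φ (n + 1))) := measure_mono_ae (ae_le_set.2 hnull)
  have hlt : μ.real (U (φ (n + 1))) < μ.real (U (φ n)) :=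
    (inv_lt_inv₀ (hreal _) (hreal _)).1 (hanti n.lt_succ_self)
  exact hlt.not_ge (ENNReal.toReal_mono (measure_ne_top _ _) hle)

lemma eventually_thickening_subset {X : Type*} [PseudoEMetricSpace X] {s U : Set X}
    (hs : IsCompact s) (hU : U ∈ 𝓝ˢ s) : ∀ᶠ r in 𝓝[>] (0 : ℝ), thickening r s ⊆ U := by
  obtain ⟨δ, hδ, hsub⟩ := (hasBasis_nhdsSet_thickening hs).mem_iff.1 hU
  filter_upwards [Ioo_mem_nhdsGT hδ] with r hr using (thickening_mono hr.2.le s).trans hsub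

variable {X : Type*} [EMetricSpace X] [MeasurableSpace X] [OpensMeasurableSpace X]
  {μ : Measure X} [IsFiniteMeasure μ] [NullSingletonClass μ]

lemma tendsto_measure_thickening_of_finite {s : Set X} (hs : s.Finite) :
    Tendsto (fun r => μ (thickening r s)) (𝓝[>] 0) (𝓝 0) := by
  simpa only [hs.measure_zero] using
    tendsto_measure_thickening_of_isClosed ⟨1, one_pos, measure_ne_top μ _⟩ hs.isClosed

lemma exists_antitone_measure_thickening_sdiff_succ_ne_zero [μ.IsOpenPosMeasure] {s : Set X}
    (hs : s.Finite) (hne : s.Nonempty) :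
    ∃ r : ℕ → ℝ, Antitone r ∧ Tendsto r atTop (𝓝[>] 0) ∧
      ∀ n, μ (thickening (r n) s \ thickening (r (n + 1)) s) ≠ 0 := by
  obtain ⟨r, hr, hpos, hlim⟩ := exists_seq_strictAnti_tendsto_nhdsWithin (0 : ℝ)
  have hμ : ∀ n, μ (thickening (r n) s) ≠ 0 := fun n =>
    isOpen_thickening.measure_ne_zero μ (hne.mono (self_subset_thickening (hpos n) s))
  obtain ⟨φ, hφ, hshell⟩ := exists_subseq_measure_sdiff_succ_ne_zero hμ
    ((tendsto_measure_thickening_of_finite hs).comp hlim)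
  exact ⟨r ∘ φ, hr.antitone.comp_monotone hφ.monotone, hlim.comp hφ.tendsto_atTop, hshell⟩

lemma eventually_eLpNorm_indicator_thickening_le {E : Type*} [NormedAddCommGroup E]
    {p : ENNReal} (hp : 1 ≤ p) (hp' : p ≠ ⊤) {f : X → E} (hf : MemLp f p μ) {s : Set X}
    (hs : s.Finite) {ε : ℝ} (hε : 0 < ε) :
    ∀ᶠ r in 𝓝[>] (0 : ℝ), eLpNorm ((thickening r s).indicator f) p μ ≤ ENNReal.ofReal ε := by
  obtain ⟨δ, hδ, hsmall⟩ := hf.eLpNorm_indicator_le hp hp' hε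
  filter_upwards [(tendsto_measure_thickening_of_finite (μ := μ) hs).eventually_le_const
    (ENNReal.ofReal_pos.2 hδ)] with r hr
  exact hsmall _ isOpen_thickening.measurableSet hr

end Shells

section Swap

open Metric

variable {X : Type*} [PseudoMetricSpace X]

lemma swap_preimage_thickening_pair (z : X × X) (r : ℝ) :
    Prod.swap ⁻¹' thickening r {z, z.swap} = thickening r {z, z.swap} := by
  ext x
  simp [mem_thickening_iff, Prod.dist_eq, max_comm, or_comm]

lemma snd_mem_thickening_pair {z x : X × X} {r : ℝ} (hx : x ∈ thickening r {z, z.swap}) :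
    x.2 ∈ thickening r {z.1, z.2} := by
  simp only [mem_thickening_iff, mem_insert_iff, mem_singleton_iff, exists_eq_or_imp,
    exists_eq_left, Prod.dist_eq, Prod.fst_swap, Prod.snd_swap, max_lt_iff] at hx ⊢
  tauto

end Swap

section TorusFunctions

instance nullSingletonClass_addCircle {T : ℝ} [hT : Fact (0 < T)] :
    NullSingletonClass (volume : Measure (AddCircle T)) where
  measure_singleton x := by
    rw [← Metric.closedBall_zero, AddCircle.volume_closedBall]
    simp [hT.out.le]

instance nullSingletonClass_prod_torus [NeZero d] :
    NullSingletonClass (volume : Measure (Td d × Td d)) :=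
  Measure.prod.instNullSingletonClass_fst

lemma bigBand_eq_range {w₂ : Td d → Td d → Td d → ℝ} {K : Td d}
    (hw : Continuous fun x : Td d × Td d => w₂ K x.1 x.2) :
    bigBand w₂ K = range fun x : Td d × Td d => (w₂ K x.1 x.2 : ℂ) :=
  (congrArg (ofReal '' ·) (eq_Icc_of_connected_compact (isConnected_range hw)
    (isCompact_range hw)).symm).trans (range_comp ofReal _).symm

lemma mem_symSub_iff {f : L2two d} : f ∈ symSub d ↔ f ∘ Prod.swap =ᵐ[volume] f := by
  have hswap : swapL d f =ᵐ[volume] f ∘ Prod.swap :=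
    Lp.coeFn_compMeasurePreserving f Measure.measurePreserving_swap
  rw [symSub, LinearMap.mem_ker, LinearMap.sub_apply, LinearMap.id_apply, sub_eq_zero, Lp.ext_iff]
  exact ⟨hswap.symm.trans, hswap.trans⟩

/-- The indicator function of a swap-invariant set, as an element of `L²_sym((T^d)²)`. -/
def symIndicator {S : Set (Td d × Td d)} (hS : MeasurableSet S) (hswap : Prod.swap ⁻¹' S = S) :
    L2sym d :=
  ⟨indicatorConstLp 2 hS (measure_ne_top volume S) 1, by
    have hcomp := Lp.indicatorConstLp_compMeasurePreserving (p := 2) hS (measure_ne_top volume S)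
      (1 : ℂ) Measure.measurePreserving_swap
    simp only [hswap] at hcomp
    exact LinearMap.mem_ker.2 (sub_eq_zero.2 hcomp)⟩

section SymIndicator

variable {S T : Set (Td d × Td d)} (hS : MeasurableSet S) (hswap : Prod.swap ⁻¹' S = S)

lemma coeFn_symIndicator :
    (symIndicator hS hswap : L2two d) =ᵐ[volume] S.indicator fun _ => (1 : ℂ) :=
  indicatorConstLp_coeFn (hs := hS) (hμs := measure_ne_top volume S)

lemma symIndicator_ne_zero (hpos : volume S ≠ 0) : symIndicator hS hswap ≠ 0 := by
  rw [← norm_ne_zero_iff, symIndicator, Submodule.coe_norm,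
    norm_indicatorConstLp (by simp) (by simp), norm_one, one_mul]
  exact (Real.rpow_pos_of_pos (ENNReal.toReal_pos hpos (measure_ne_top _ _)) _).ne'

lemma inner_symIndicator_eq_zero (hT : MeasurableSet T) (hswapT : Prod.swap ⁻¹' T = T)
    (hST : Disjoint S T) :
    inner ℂ (symIndicator hS hswap : L2two d) (symIndicator hT hswapT) = 0 := by
  rw [symIndicator, symIndicator, L2.inner_indicatorConstLp_one_indicatorConstLp_one,
    hST.inter_eq, measureReal_empty]
  exact ofReal_zero

end SymIndicator

end TorusFunctions

section FockSpace

/-- The embedding of the one-particle space `L²(T^d)` into `H`. -/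
def oneParticle (g : L2 d) : H3 d := WithLp.toLp 2 (0, WithLp.toLp 2 (g, 0))

/-- The isometric embedding of the two-particle space `L²_sym((T^d)²)` into `H`. -/
def twoParticle : L2sym d →ₗᵢ[ℂ] H3 d where
  toFun g := WithLp.toLp 2 (0, WithLp.toLp 2 (0, g))
  map_add' _ _ := by simp [← WithLp.toLp_add]
  map_smul' _ _ := by simp [← WithLp.toLp_smul]
  norm_map' g :=
    (WithLp.norm_toLp_snd 2 ℂ _ _).trans (WithLp.norm_toLp_snd 2 (L2 d) _ g)

lemma inner_twoParticle (g h : L2sym d) :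
    inner ℂ (twoParticle g) (twoParticle h) = inner ℂ (g : L2two d) h := by
  rw [WithLp.prod_inner_apply, WithLp.prod_inner_apply]
  change inner ℂ (0 : ℂ) 0 + (inner ℂ (0 : L2 d) 0 + inner ℂ (g : L2two d) h) = _
  rw [inner_zero_left, inner_zero_left, zero_add, zero_add]

lemma norm_le_norm_p0_add_norm_p1_add_norm_p2 (f : H3 d) : ‖f‖ ≤ ‖p0 f‖ + ‖p1 f‖ + ‖p2 f‖ := by
  rw [← sq_le_sq₀ (norm_nonneg _) (by positivity),
    WithLp.prod_norm_sq_eq_of_L2, WithLp.prod_norm_sq_eq_of_L2]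
  change ‖p0 f‖ ^ 2 + (‖p1 f‖ ^ 2 + ‖p2 f‖ ^ 2) ≤ _
  have hcross : 0 ≤ ‖p0 f‖ * ‖p1 f‖ + ‖p0 f‖ * ‖p2 f‖ + ‖p1 f‖ * ‖p2 f‖ := by positivity
  linarith

end FockSpace

namespace IsHamiltonian

open Asymptotics Metric

variable {w₀ v₀ v₁ : Td d → ℝ} {w₁ : Td d → Td d → ℝ} {w₂ : Td d → Td d → Td d → ℝ} {K : Td d}
  {H : H3 d →L[ℂ] H3 d}

lemma p0_apply_twoParticle (hH : IsHamiltonian w₀ v₀ v₁ w₁ w₂ K H) (g : L2sym d) :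
    p0 (H (twoParticle g)) = 0 := by
  have hint : ∫ t, (v₀ t : ℂ) * (0 : L2 d) t = 0 :=
    integral_eq_zero_of_ae <| (Lp.coeFn_zero ℂ 2 volume).mono fun t ht => by
      simp only [ht, Pi.zero_apply, mul_zero]
  refine (hH (twoParticle g)).1.trans ?_
  change (w₀ K : ℂ) * 0 + ∫ t, (v₀ t : ℂ) * (0 : L2 d) t = 0
  rw [hint, mul_zero, add_zero]

lemma p1_apply_twoParticle (hH : IsHamiltonian w₀ v₀ v₁ w₁ w₂ K H) (g : L2sym d) :
    p1 (H (twoParticle g)) =ᵐ[volume] fun p => ∫ t, (v₁ t : ℂ) * (g : L2two d) (p, t) := by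
  filter_upwards [(hH (twoParticle g)).2.1, Lp.coeFn_zero ℂ 2 (volume : Measure (Td d))]
    with p hp hzero
  refine hp.trans ?_
  change (v₀ p : ℂ) * 0 + (w₁ K p : ℂ) * (0 : L2 d) p + _ = _
  rw [hzero, Pi.zero_apply, mul_zero, mul_zero, zero_add, zero_add]
  rfl

lemma p2_apply_twoParticle (hH : IsHamiltonian w₀ v₀ v₁ w₁ w₂ K H) (g : L2sym d) :
    p2 (H (twoParticle g)) =ᵐ[volume] fun x => (w₂ K x.1 x.2 : ℂ) * (g : L2two d) x := by
  have hzero := Lp.coeFn_zero ℂ 2 (volume : Measure (Td d))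
  filter_upwards [(hH (twoParticle g)).2.2, Measure.quasiMeasurePreserving_fst.ae hzero,
    Measure.quasiMeasurePreserving_snd.ae hzero] with x hx hfst hsnd
  refine hx.trans ?_
  change ((v₁ x.1 : ℂ) * (0 : L2 d) x.2 + (v₁ x.2 : ℂ) * (0 : L2 d) x.1) / 2 + _ = _
  rw [hfst, hsnd, Pi.zero_apply, Pi.zero_apply, mul_zero, mul_zero, add_zero, zero_div, zero_add]
  rfl

lemma p2_apply_oneParticle (hH : IsHamiltonian w₀ v₀ v₁ w₁ w₂ K H) (g : L2 d) :
    p2 (H (oneParticle g)) =ᵐ[volume]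
      fun x => ((v₁ x.1 : ℂ) * g x.2 + (v₁ x.2 : ℂ) * g x.1) / 2 := by
  filter_upwards [(hH (oneParticle g)).2.2, Lp.coeFn_zero ℂ 2 (volume : Measure (Td d × Td d))]
    with x hx hzero
  refine hx.trans ?_
  change _ + (w₂ K x.1 x.2 : ℂ) * (0 : L2two d) x = _
  rw [hzero, Pi.zero_apply, mul_zero, add_zero]
  rfl

lemma memLp_v₁ (hH : IsHamiltonian w₀ v₀ v₁ w₁ w₂ K H) :
    MemLp (fun t => (v₁ t : ℂ)) 2 volume := by
  have hone := Lp.coeFn_const 2 (volume : Measure (Td d)) (1 : ℂ)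
  have hsum : (fun x : Td d × Td d => ((v₁ x.1 : ℂ) + v₁ x.2) / 2) =ᵐ[volume]
      p2 (H (oneParticle (Lp.const 2 volume 1))) := by
    filter_upwards [hH.p2_apply_oneParticle (Lp.const 2 volume 1),
      Measure.quasiMeasurePreserving_fst.ae hone, Measure.quasiMeasurePreserving_snd.ae hone]
      with x hx hfst hsnd
    rw [hx, hfst, hsnd, Function.const_apply, Function.const_apply, mul_one, mul_one]
  obtain ⟨p, hp⟩ := (ae_memLp_prodMk ((memLp_congr_ae hsum).2 (Lp.memLp _)) two_ne_zero
    ENNReal.ofNat_ne_top).exists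
  convert (hp.const_mul 2).sub (memLp_const (v₁ p : ℂ)) using 1
  ext t
  simp only [Pi.sub_apply]
  ring

lemma w₂_swap (hH : IsHamiltonian w₀ v₀ v₁ w₁ w₂ K H)
    (hw : Continuous fun x : Td d × Td d => w₂ K x.1 x.2) (x : Td d × Td d) :
    w₂ K x.2 x.1 = w₂ K x.1 x.2 := by
  have hmul : p2 (H (twoParticle (symIndicator .univ preimage_univ))) =ᵐ[volume]
      fun x => (w₂ K x.1 x.2 : ℂ) := by
    filter_upwards [hH.p2_apply_twoParticle (symIndicator .univ preimage_univ),
      coeFn_symIndicator .univ preimage_univ] with x hx hone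
    rw [hx, hone, indicator_univ, mul_one]
  have hsymm : (fun x : Td d × Td d => (w₂ K x.2 x.1 : ℂ)) =ᵐ[volume]
      fun x => (w₂ K x.1 x.2 : ℂ) :=
    (Measure.measurePreserving_swap.quasiMeasurePreserving.ae_eq_comp hmul).symm.trans
      ((mem_symSub_iff.1 (Subtype.property _)).trans hmul)
  have heq := ((continuous_ofReal.comp (hw.comp continuous_swap)).ae_eq_iff_eq volume
    (continuous_ofReal.comp hw)).1 hsymm
  exact ofReal_injective (congrFun heq x)

lemma enorm_p1_apply_twoParticle_le (hH : IsHamiltonian w₀ v₀ v₁ w₁ w₂ K H) {B : Set (Td d)}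
    (hB : MeasurableSet B) {g : L2sym d}
    (hg : ∀ᵐ x : Td d × Td d, x.2 ∉ B → (g : L2two d) x = 0) :
    ‖p1 (H (twoParticle g))‖ₑ ≤
      eLpNorm (B.indicator fun t => (v₁ t : ℂ)) 2 volume * ‖g‖ₑ := by
  have hcut : p1 (H (twoParticle g)) =ᵐ[volume]
      fun p => ∫ t, B.indicator (fun t => (v₁ t : ℂ)) t * (g : L2two d) (p, t) := by
    filter_upwards [hH.p1_apply_twoParticle g, Measure.ae_ae_of_ae_prod hg] with p hp hgp
    rw [hp]
    refine integral_congr_ae ?_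
    filter_upwards [hgp] with t ht
    by_cases htB : t ∈ B
    · rw [indicator_of_mem htB]
    · rw [ht htB, mul_zero, mul_zero]
  have hnorm : ‖g‖ₑ = eLpNorm (g : L2two d) 2 (volume.prod volume) := Lp.enorm_def (g : L2two d)
  rw [Lp.enorm_def, eLpNorm_congr_ae hcut, hnorm]
  exact eLpNorm_integral_mul_prodMk_le (hH.memLp_v₁.indicator hB)
    (Lp.aestronglyMeasurable _) two_ne_zero ENNReal.ofNat_ne_top

lemma norm_p2_apply_twoParticle_sub_smul_le (hH : IsHamiltonian w₀ v₀ v₁ w₁ w₂ K H)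
    {S : Set (Td d × Td d)} {l ε : ℝ} (hS : ∀ x ∈ S, |w₂ K x.1 x.2 - l| ≤ ε) {g : L2sym d}
    (hg : ∀ᵐ x, x ∉ S → (g : L2two d) x = 0) :
    ‖p2 (H (twoParticle g)) - (l : ℂ) • (g : L2two d)‖ ≤ ε * ‖g‖ := by
  rw [Submodule.coe_norm]
  refine Lp.norm_le_mul_norm_of_ae_le_mul ?_
  filter_upwards [hH.p2_apply_twoParticle g, hg,
    Lp.coeFn_sub (p2 (H (twoParticle g))) ((l : ℂ) • (g : L2two d)),
    Lp.coeFn_smul (l : ℂ) (g : L2two d)] with x hx hgx hsub hsmul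
  rw [hsub, Pi.sub_apply, hsmul, hx, Pi.smul_apply, smul_eq_mul, ← sub_mul, norm_mul,
    ← ofReal_sub, norm_real, Real.norm_eq_abs]
  by_cases hxS : x ∈ S
  · exact mul_le_mul_of_nonneg_right (hS x hxS) (norm_nonneg _)
  · rw [hgx hxS, norm_zero, mul_zero, mul_zero]

lemma eventually_abs_w₂_sub_le (hH : IsHamiltonian w₀ v₀ v₁ w₁ w₂ K H)
    (hw : Continuous fun x : Td d × Td d => w₂ K x.1 x.2) (z : Td d × Td d) {ε : ℝ} (hε : 0 < ε) :
    ∀ᶠ r in 𝓝[>] (0 : ℝ), ∀ x ∈ thickening r {z, z.swap},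
      |w₂ K x.1 x.2 - w₂ K z.1 z.2| ≤ ε := by
  refine eventually_thickening_subset (toFinite _).isCompact ?_
  have hball : ∀ y ∈ ({z, z.swap} : Set (Td d × Td d)),
      w₂ K y.1 y.2 ∈ ball (w₂ K z.1 z.2) ε := by
    rintro y (rfl | rfl)
    · exact mem_ball_self hε
    · rw [Prod.fst_swap, Prod.snd_swap, hH.w₂_swap hw]
      exact mem_ball_self hε
  exact mem_of_superset ((isOpen_ball.preimage hw).mem_nhdsSet.2 hball)
    fun x hx => (mem_ball_iff_norm.1 hx).le

lemma eventually_norm_apply_twoParticle_sub_smul_le [NeZero d]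
    (hH : IsHamiltonian w₀ v₀ v₁ w₁ w₂ K H)
    (hw : Continuous fun x : Td d × Td d => w₂ K x.1 x.2) (z : Td d × Td d) {ε : ℝ} (hε : 0 < ε) :
    ∀ᶠ r in 𝓝[>] (0 : ℝ), ∀ g : L2sym d,
      (∀ᵐ x, x ∉ thickening r {z, z.swap} → (g : L2two d) x = 0) →
        ‖H (twoParticle g) - (w₂ K z.1 z.2 : ℂ) • twoParticle g‖ ≤ ε * ‖g‖ := by
  filter_upwards [hH.eventually_abs_w₂_sub_le hw z (half_pos hε),
    eventually_eLpNorm_indicator_thickening_le one_le_two ENNReal.ofNat_ne_top hH.memLp_v₁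
      (toFinite {z.1, z.2}) (half_pos hε)] with r hw_near hv_small g hg
  have hzero : p0 (H (twoParticle g) - (w₂ K z.1 z.2 : ℂ) • twoParticle g) = 0 := by
    change p0 (H (twoParticle g)) - (w₂ K z.1 z.2 : ℂ) • (0 : ℂ) = 0
    rw [hH.p0_apply_twoParticle, smul_zero, sub_zero]
  have hone : ‖p1 (H (twoParticle g) - (w₂ K z.1 z.2 : ℂ) • twoParticle g)‖ ≤ ε / 2 * ‖g‖ := by
    change ‖p1 (H (twoParticle g)) - (w₂ K z.1 z.2 : ℂ) • (0 : L2 d)‖ ≤ _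
    rw [smul_zero, sub_zero, ← ENNReal.ofReal_le_ofReal_iff (by positivity), ofReal_norm,
      ENNReal.ofReal_mul (half_pos hε).le, ofReal_norm]
    refine (hH.enorm_p1_apply_twoParticle_le isOpen_thickening.measurableSet
      (hg.mono fun x hx hx2 => hx fun hxr => hx2 (snd_mem_thickening_pair hxr))).trans ?_
    gcongr
  have htwo : ‖p2 (H (twoParticle g) - (w₂ K z.1 z.2 : ℂ) • twoParticle g)‖ ≤ ε / 2 * ‖g‖ :=
    hH.norm_p2_apply_twoParticle_sub_smul_le hw_near hg
  calc ‖H (twoParticle g) - (w₂ K z.1 z.2 : ℂ) • twoParticle g‖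
      ≤ ‖(0 : ℂ)‖ + ε / 2 * ‖g‖ + ε / 2 * ‖g‖ := by
        refine (norm_le_norm_p0_add_norm_p1_add_norm_p2 _).trans ?_
        rw [hzero]
        gcongr
    _ = ε * ‖g‖ := by rw [norm_zero]; ring

lemma isLittleO_apply_twoParticle_sub_smul [NeZero d] (hH : IsHamiltonian w₀ v₀ v₁ w₁ w₂ K H)
    (hw : Continuous fun x : Td d × Td d => w₂ K x.1 x.2) (z : Td d × Td d) {r : ℕ → ℝ}
    (hr : Tendsto r atTop (𝓝[>] 0)) {g : ℕ → L2sym d}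
    (hg : ∀ n, ∀ᵐ x, x ∉ thickening (r n) {z, z.swap} → (g n : L2two d) x = 0) :
    (fun n => H (twoParticle (g n)) - (w₂ K z.1 z.2 : ℂ) • twoParticle (g n)) =o[atTop]
      fun n => twoParticle (g n) := by
  refine IsLittleO.of_bound fun ε hε => ?_
  filter_upwards [hr.eventually (hH.eventually_norm_apply_twoParticle_sub_smul_le hw z hε)]
    with n hn
  rw [twoParticle.norm_map]
  exact hn (g n) (hg n)

lemma coe_w₂_mem_essSpec [NeZero d] (hH : IsHamiltonian w₀ v₀ v₁ w₁ w₂ K H)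
    (hw : Continuous fun x : Td d × Td d => w₂ K x.1 x.2) (z : Td d × Td d) :
    (w₂ K z.1 z.2 : ℂ) ∈ essSpec H := by
  obtain ⟨r, hr_anti, hr, hpos⟩ := exists_antitone_measure_thickening_sdiff_succ_ne_zero
    (μ := volume) (toFinite {z, z.swap}) (insert_nonempty _ _)
  set U : ℕ → Set (Td d × Td d) := fun n => thickening (r n) {z, z.swap} with hU
  have hU_anti : Antitone U := fun m n hmn => thickening_mono (hr_anti hmn) _
  have hS : ∀ n, MeasurableSet (U n \ U (n + 1)) := fun n =>
    isOpen_thickening.measurableSet.diff isOpen_thickening.measurableSet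
  have hswap : ∀ n, Prod.swap ⁻¹' (U n \ U (n + 1)) = U n \ U (n + 1) := fun n => by
    simp only [hU, preimage_sdiff, swap_preimage_thickening_pair]
  refine mem_essSpec_of_isLittleO (E := H3 d)
    (v := fun n => twoParticle (symIndicator (hS n) (hswap n)))
    (fun n => ?_) (fun m n hmn => ?_)
    (hH.isLittleO_apply_twoParticle_sub_smul hw z hr fun n => ?_)
  · exact (map_ne_zero_iff _ twoParticle.injective).2 (symIndicator_ne_zero _ _ (hpos n))
  · exact (inner_twoParticle _ _).trans <|
      inner_symIndicator_eq_zero _ _ _ _ (pairwise_disjoint_sdiff_succ hU_anti hmn)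
  · filter_upwards [coeFn_symIndicator (hS n) (hswap n)] with x hx hxU
    rw [hx, indicator_of_notMem fun hxS => hxU hxS.1]

end IsHamiltonian

theorem bigBand_subset_essSpec_general {w₀ v₀ v₁ : Td d → ℝ} {w₁ : Td d → Td d → ℝ}
    {w₂ : Td d → Td d → Td d → ℝ} {K : Td d} {H : H3 d →L[ℂ] H3 d} (hd : 1 ≤ d)
    (hw : Continuous fun x : Td d × Td d => w₂ K x.1 x.2)
    (hH : IsHamiltonian w₀ v₀ v₁ w₁ w₂ K H) :
    bigBand w₂ K ⊆ essSpec H := by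
  have : NeZero d := ⟨Nat.one_le_iff_ne_zero.1 hd⟩
  rw [bigBand_eq_range hw]
  exact range_subset_iff.2 (hH.coe_w₂_mem_essSpec hw)

/-- For every `K ∈ T^d`, `[m_K, M_K] ⊆ σ_ess(H(K))`. -/
theorem bigBand_subset_essSpec
    (d : ℕ) (hd : 1 ≤ d)
    (w₀ v₀ v₁ : Td d → ℝ) (w₁ : Td d → Td d → ℝ) (w₂ : Td d → Td d → Td d → ℝ)
    (hw₀ : Continuous w₀) (hv₀ : Continuous v₀) (hv₁ : Continuous v₁)
    (hw₁ : Continuous fun x : Td d × Td d => w₁ x.1 x.2)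
    (hw₂ : Continuous fun x : Td d × Td d × Td d => w₂ x.1 x.2.1 x.2.2)
    (hsym : ∀ K p q : Td d, w₂ K p q = w₂ K q p)
    (K : Td d) (H : H3 d →L[ℂ] H3 d)
    (hH : IsHamiltonian w₀ v₀ v₁ w₁ w₂ K H) :
    bigBand w₂ K ⊆ essSpec H := by
  exact bigBand_subset_essSpec_general hd (hw₂.comp (Continuous.prodMk_right K)) hH
end
end
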